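/- Let D ⊂ ℝ^d be a bounded open set, let ρ : D → ℝ be a Lipschitz function bounded above and below by positive constants, and let η be a kernel satisfying (K1)–(K3). Let ε_n → 0 and let u_{ε_n} be C² functions on ℝ^d with sup_n ( ‖∇u_{ε_n}‖_{L^∞(ℝ^d)} + ‖D²u_{ε_n}‖_{L^∞(ℝ^d)} ) < ∞. If ∇u_{ε_n} → ∇u in L¹(D) for some u ∈ C²(ℝ^d), then lim_{n→∞} TV_{ε_n}(u_{ε_n}; ρ) = σ_η ∫_D |∇u(x)| ρ(x)² dx. -/

import Mathlib

/-!
Substituting `y = x + ε h` turns the nonlocal total variation into the integral over `D × ℝ^d` of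
`η(h) · |u_ε(x + ε h) - u_ε(x)| / ε · ρ(x) ρ(x + ε h)`, where `ρ` is extended by zero outside `D`
(`nonlocalTV_eq_lintegral_rescaled`). The uniform gradient bound dominates this integrand by a
constant times `η(h) |h|`, which is integrable on `D × ℝ^d` because `D` is bounded and by the moment
condition on `η` in polar coordinates. The uniform bound on the second derivatives shows that the
difference quotient tends to `|∇u(x) · h|` at every `x` where `∇u_ε(x) → ∇u(x)`
(`tendsto_abs_sub_div`). Such convergence holds almost everywhere along a subsequence of any
subsequence, since the gradients converge in `L¹(D)`; as the limit does not depend on the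
subsequence, dominated convergence (`tendsto_lintegral_rescaled`) gives the convergence of the whole
sequence to `∫_D ∫ η(h) |∇u(x) · h| ρ(x)² dh dx`. By rotation invariance of `η` the inner integral
is `σ_η |∇u(x)| ρ(x)²` (`integral_profile_mul_abs_apply`).
-/

open MeasureTheory Filter Set ENNReal
open scoped InnerProductSpace NNReal Topology

noncomputable section

/-- A set `D ⊆ ℝ^d` has Lipschitz boundary: near every boundary point, after a rotation,
`D` is the subgraph of a Lipschitz function of the first `d-1` coordinates. -/
def HasLipschitzBoundary {d : ℕ} (D : Set (EuclideanSpace ℝ (Fin d))) : Prop :=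
  ∀ x ∈ frontier D,
    ∃ (U : Set (EuclideanSpace ℝ (Fin d)))
      (e : EuclideanSpace ℝ (Fin d) ≃ₗᵢ[ℝ] EuclideanSpace ℝ (Fin d))
      (φ : EuclideanSpace ℝ (Fin d) → ℝ) (K : ℝ≥0),
      IsOpen U ∧ x ∈ U ∧ LipschitzWith K φ ∧
      (∀ p q : EuclideanSpace ℝ (Fin d),
        (∀ i : Fin d, (i : ℕ) + 1 ≠ d → p i = q i) → φ p = φ q) ∧
      D ∩ U = {y | y ∈ U ∧ ∀ i : Fin d, (i : ℕ) + 1 = d → e y i < φ (e y)}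

/-- Conditions (K1)-(K3) on the radial profile of the kernel. -/
structure KernelConditions (d : ℕ) (ηf : ℝ → ℝ) : Prop where
  nonneg : ∀ r : ℝ, 0 ≤ r → 0 ≤ ηf r
  pos_zero : 0 < ηf 0
  continuousAt_zero : ContinuousWithinAt ηf (Ici 0) 0
  antitone : ∀ r s : ℝ, 0 ≤ r → r ≤ s → ηf s ≤ ηf r
  moment_finite : IntegrableOn (fun r : ℝ => ηf r * r ^ d) (Ioi (0 : ℝ))

/-- The rescaled kernel `η_ε(z) = ε^{-d} η(z/ε)` associated to a radial profile. -/
def etaEps {d : ℕ} (ηf : ℝ → ℝ) (ε : ℝ) (z : EuclideanSpace ℝ (Fin d)) : ℝ :=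
  (ε ^ d)⁻¹ * ηf (‖z‖ / ε)

/-- The surface tension `σ_η = ∫ η(h) |h·e| dh` (`e` a unit vector). -/
def surfaceTension {d : ℕ} (ηf : ℝ → ℝ) (e1 : EuclideanSpace ℝ (Fin d)) : ℝ :=
  ∫ h : EuclideanSpace ℝ (Fin d), ηf ‖h‖ * |⟪h, e1⟫_ℝ|

/-- The graph total variation `GTV_{n,ε}`. -/
def graphTV {d : ℕ} (ηf : ℝ → ℝ) (X : ℕ → EuclideanSpace ℝ (Fin d)) (n : ℕ) (ε : ℝ)
    (u : EuclideanSpace ℝ (Fin d) → ℝ) : ℝ :=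
  (1 / (ε * (n : ℝ) ^ 2)) * ∑ i ∈ Finset.range n, ∑ j ∈ Finset.range n,
    etaEps ηf ε (X i - X j) * |u (X i) - u (X j)|

/-- Divergence of a vector field on `ℝ^d`. -/
def diverg {d : ℕ} (φ : EuclideanSpace ℝ (Fin d) → EuclideanSpace ℝ (Fin d))
    (x : EuclideanSpace ℝ (Fin d)) : ℝ :=
  ∑ i : Fin d, fderiv ℝ φ x (EuclideanSpace.single i 1) i

/-- The weighted total variation `TV(u; ψ)`. -/
def weightedTV {d : ℕ} (D : Set (EuclideanSpace ℝ (Fin d)))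
    (u : EuclideanSpace ℝ (Fin d) → ℝ) (ψ : EuclideanSpace ℝ (Fin d) → ℝ) : ℝ≥0∞ :=
  ⨆ (φ : EuclideanSpace ℝ (Fin d) → EuclideanSpace ℝ (Fin d))
    (_ : ContDiff ℝ (⊤ : ℕ∞) φ ∧ HasCompactSupport φ ∧ tsupport φ ⊆ D ∧ ∀ x ∈ D, ‖φ x‖ ≤ ψ x),
    ENNReal.ofReal (∫ x in D, u x * diverg φ x)

/-- The nonlocal total variation `TV_ε(u; ρ)`. -/
def nonlocalTV {d : ℕ} (D : Set (EuclideanSpace ℝ (Fin d))) (ηf : ℝ → ℝ) (ε : ℝ)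
    (u ρ : EuclideanSpace ℝ (Fin d) → ℝ) : ℝ≥0∞ :=
  ENNReal.ofReal (1 / ε) *
    ∫⁻ x in D, ∫⁻ y in D, ENNReal.ofReal (etaEps ηf ε (x - y) * |u x - u y| * ρ x * ρ y)

/-- Couplings (transportation plans) between two measures. -/
def couplings {α β : Type*} [MeasurableSpace α] [MeasurableSpace β]
    (μ : Measure α) (θ : Measure β) : Set (Measure (α × β)) :=
  {π | π.map Prod.fst = μ ∧ π.map Prod.snd = θ}

/-- The `TL^p` distance between `(μ, f)` and `(θ, g)`. -/
def dTL {E : Type*} [NormedAddCommGroup E] [MeasurableSpace E] (p : ℝ)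
    (μ : Measure E) (f : E → ℝ) (θ : Measure E) (g : E → ℝ) : ℝ≥0∞ :=
  ⨅ π ∈ couplings μ θ,
    (∫⁻ z, ENNReal.ofReal (‖z.1 - z.2‖ ^ p + |f z.1 - g z.2| ^ p) ∂π) ^ (1 / p)

/-- The transportation distance `𝐝_p` on probability measures on `D × ℝ`. -/
def dProd {E : Type*} [NormedAddCommGroup E] [MeasurableSpace E] (p : ℝ)
    (γ γ' : Measure (E × ℝ)) : ℝ≥0∞ :=
  ⨅ π ∈ couplings γ γ',
    (∫⁻ z, ENNReal.ofReal (‖z.1.1 - z.2.1‖ ^ p + |z.1.2 - z.2.2| ^ p) ∂π) ^ (1 / p)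

/-- The empirical measure `ν_n = (1/n) ∑_{i<n} δ_{X_i(ω)}`. -/
def empMeasure {d : ℕ} {Ω : Type*} [MeasurableSpace Ω]
    (X : ℕ → Ω → EuclideanSpace ℝ (Fin d)) (n : ℕ) (ω : Ω) :
    Measure (EuclideanSpace ℝ (Fin d)) :=
  ((n : ℝ≥0∞))⁻¹ • ∑ i ∈ Finset.range n, Measure.dirac (X i ω)

/-! ### The kernel -/

lemma KernelConditions.measurable_profile {d : ℕ} {ηf : ℝ → ℝ} (hη : KernelConditions d ηf) :
    Measurable fun h : EuclideanSpace ℝ (Fin d) => ηf ‖h‖ := by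
  have hanti : Antitone fun r : ℝ => ηf (max r 0) := fun r s hrs =>
    hη.antitone _ _ (le_max_right _ _) (max_le_max_right _ hrs)
  have := hanti.measurable.comp (measurable_norm (α := EuclideanSpace ℝ (Fin d)))
  convert! this using 2 with h
  simp

/-- In polar coordinates the moment condition says that `η(h) |h|` is integrable. -/
lemma KernelConditions.integrable_mul_norm {d : ℕ} {ηf : ℝ → ℝ} (hη : KernelConditions d ηf)
    (hd : d ≠ 0) : Integrable fun h : EuclideanSpace ℝ (Fin d) => ηf ‖h‖ * ‖h‖ := by
  have : NeZero d := ⟨hd⟩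
  have := (integrable_fun_norm_addHaar (volume : Measure (EuclideanSpace ℝ (Fin d)))
    (f := fun r : ℝ => ηf r * r)).2 ?_
  · exact this
  · refine hη.moment_finite.congr_fun (fun r hr => ?_) measurableSet_Ioi
    obtain ⟨k, rfl⟩ := Nat.exists_eq_succ_of_ne_zero hd
    simp only [finrank_euclideanSpace, Fintype.card_fin, smul_eq_mul, Nat.succ_eq_add_one,
      Nat.add_sub_cancel, pow_succ]
    ring

/-- Rotation invariance: a reflection taking `e1` to the direction of the Riesz representative
of `L` preserves volume and the radial weight. -/
lemma integral_profile_mul_abs_apply {d : ℕ} (ηf : ℝ → ℝ)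
    {e1 : EuclideanSpace ℝ (Fin d)} (he1 : ‖e1‖ = 1) (L : EuclideanSpace ℝ (Fin d) →L[ℝ] ℝ) :
    ∫ h, ηf ‖h‖ * |L h| = surfaceTension ηf e1 * ‖L‖ := by
  obtain ⟨v, rfl⟩ := (InnerProductSpace.toDual ℝ (EuclideanSpace ℝ (Fin d))).surjective L
  simp only [InnerProductSpace.toDual_apply_apply, LinearIsometryEquiv.norm_map]
  have hnorm : ‖‖v‖ • e1‖ = ‖v‖ := by simp [norm_smul, he1]
  let R := Submodule.reflection (Submodule.span ℝ {‖v‖ • e1 - v})ᗮ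
  have hR : R (‖v‖ • e1) = v := Submodule.reflection_sub hnorm
  have hmp := R.measurePreserving
  rw [← hmp.integral_comp R.toHomeomorph.measurableEmbedding, surfaceTension,
    ← integral_mul_const]
  congr 1 with h
  rw [← hR, LinearIsometryEquiv.norm_map, LinearIsometryEquiv.inner_map_map,
    LinearIsometryEquiv.norm_map, hnorm, inner_smul_left, abs_mul, real_inner_comm e1 h]
  simp
  ring

/-! ### Rescaling -/

/-- The change of variables `y = x + ε h`. -/
lemma lintegral_eq_lintegral_add_smul {d : ℕ} {g : EuclideanSpace ℝ (Fin d) → ℝ≥0∞}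
    (hg : Measurable g) (x : EuclideanSpace ℝ (Fin d)) {ε : ℝ} (hε : 0 < ε) :
    ∫⁻ y, g y = ENNReal.ofReal (ε ^ d) * ∫⁻ h, g (x + ε • h) := by
  have hx : Measurable fun z => g (x + z) := hg.comp (measurable_const_add x)
  have h1 : ∫⁻ h, g (x + ε • h) = ENNReal.ofReal ((ε ^ d)⁻¹) * ∫⁻ y, g y := by
    have hpos : 0 ≤ (ε ^ d)⁻¹ := by positivity
    rw [← lintegral_map (f := fun z => g (x + z)) hx (measurable_const_smul ε),
      Measure.map_addHaar_smul _ hε.ne', lintegral_smul_measure,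
      lintegral_add_left_eq_self]
    simp [abs_of_nonneg hε.le, smul_eq_mul]
  rw [h1, ← mul_assoc, ← ENNReal.ofReal_mul (by positivity), mul_inv_cancel₀ (by positivity),
    ENNReal.ofReal_one, one_mul]

/-- The integrand of `TV_ε(u; ρ)` in the variables `x` and `h = (y - x) / ε`. -/
def rescaledIntegrand {d : ℕ} (ηf : ℝ → ℝ) (ε : ℝ) (u ρ : EuclideanSpace ℝ (Fin d) → ℝ)
    (x h : EuclideanSpace ℝ (Fin d)) : ℝ :=
  ηf ‖h‖ * (|u (x + ε • h) - u x| / ε) * ρ x * ρ (x + ε • h)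

lemma measurable_rescaledIntegrand {d : ℕ} {ηf : ℝ → ℝ} (hη : KernelConditions d ηf) (ε : ℝ)
    {u ρ : EuclideanSpace ℝ (Fin d) → ℝ} (hu : Measurable u) (hρ : Measurable ρ) :
    Measurable fun p : EuclideanSpace ℝ (Fin d) × EuclideanSpace ℝ (Fin d) =>
      rescaledIntegrand ηf ε u ρ p.1 p.2 := by
  have h1 : Measurable fun p : EuclideanSpace ℝ (Fin d) × EuclideanSpace ℝ (Fin d) => ηf ‖p.2‖ :=
    hη.measurable_profile.comp measurable_snd
  have h2 : Measurable fun p : EuclideanSpace ℝ (Fin d) × EuclideanSpace ℝ (Fin d) =>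
    p.1 + ε • p.2 := by fun_prop
  have h3 := hu.comp h2
  have h4 := hρ.comp h2
  have h5 : Measurable fun p : EuclideanSpace ℝ (Fin d) × EuclideanSpace ℝ (Fin d) => u p.1 :=
    hu.comp measurable_fst
  have h6 : Measurable fun p : EuclideanSpace ℝ (Fin d) × EuclideanSpace ℝ (Fin d) => ρ p.1 :=
    hρ.comp measurable_fst
  unfold rescaledIntegrand
  exact ((h1.mul ((measurable_norm.comp (h3.sub h5)).div_const ε)).mul h6).mul h4

/-- Extending `ρ` by zero absorbs the constraint `x + ε h ∈ D` into the integrand. -/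
lemma nonlocalTV_eq_lintegral_rescaled {d : ℕ} {D : Set (EuclideanSpace ℝ (Fin d))}
    (hD : MeasurableSet D) {ηf : ℝ → ℝ} (hη : KernelConditions d ηf) {ε : ℝ} (hε : 0 < ε)
    {u ρ : EuclideanSpace ℝ (Fin d) → ℝ} (hu : Measurable u) (hρ : Measurable (D.indicator ρ)) :
    nonlocalTV D ηf ε u ρ =
      ∫⁻ x in D, ∫⁻ h, ENNReal.ofReal (rescaledIntegrand ηf ε u (D.indicator ρ) x h) := by
  rw [nonlocalTV, ← lintegral_const_mul' _ _ ENNReal.ofReal_ne_top]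
  refine setLIntegral_congr_fun hD fun x hx => ?_
  set ρ' := D.indicator ρ with hρ'
  have hηm : Measurable fun y : EuclideanSpace ℝ (Fin d) => ηf (‖x - y‖ / ε) := by
    have := hη.measurable_profile.comp
      (((measurable_id (α := EuclideanSpace ℝ (Fin d))).const_sub x).const_smul ε⁻¹)
    convert! this using 2 with y
    simp [norm_smul, abs_of_pos hε, div_eq_inv_mul]
  have hmeas : Measurable fun y =>
      ENNReal.ofReal (etaEps ηf ε (x - y) * |u x - u y| * ρ x * ρ' y) := by
    unfold etaEps
    exact ((((hηm.const_mul _).mul (measurable_norm.comp (hu.const_sub _))).mul_const _).mul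
      hρ).ennreal_ofReal
  have hext : ∫⁻ y in D, ENNReal.ofReal (etaEps ηf ε (x - y) * |u x - u y| * ρ x * ρ y)
      = ∫⁻ y, ENNReal.ofReal (etaEps ηf ε (x - y) * |u x - u y| * ρ x * ρ' y) := by
    rw [← lintegral_indicator hD]
    congr 1 with y
    by_cases hy : y ∈ D <;> simp [hρ', hy]
  rw [hext, lintegral_eq_lintegral_add_smul hmeas x hε,
    ← lintegral_const_mul' _ _ ENNReal.ofReal_ne_top,
    ← lintegral_const_mul' _ _ ENNReal.ofReal_ne_top]
  congr 1 with h
  rw [← ENNReal.ofReal_mul (by positivity), ← ENNReal.ofReal_mul (by positivity)]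
  have hn : ‖x - (x + ε • h)‖ / ε = ‖h‖ := by
    rw [sub_add_cancel_left, norm_neg, norm_smul, Real.norm_of_nonneg hε.le]
    field_simp
  have hxρ : ρ' x = ρ x := by simp [hρ', hx]
  rw [etaEps, rescaledIntegrand, hn, hxρ, abs_sub_comm]
  congr 1
  field_simp

/-! ### Difference quotients -/

/-- First-order Taylor bound from a bound on the second derivative. -/
lemma abs_sub_sub_fderiv_le {E : Type*} [NormedAddCommGroup E] [NormedSpace ℝ E] {f : E → ℝ}
    (hf : ContDiff ℝ 2 f) {M : ℝ} (hM : 0 ≤ M) (hb : ∀ x, ‖fderiv ℝ (fderiv ℝ f) x‖ ≤ M)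
    (x v : E) : |f (x + v) - f x - fderiv ℝ f x v| ≤ M * ‖v‖ ^ 2 := by
  have hdiff : Differentiable ℝ (fderiv ℝ f) :=
    (hf.fderiv_right (m := 1) (by norm_num)).differentiable (by norm_num)
  have hlip : ∀ z, ‖fderiv ℝ f z - fderiv ℝ f x‖ ≤ M * ‖z - x‖ := fun z =>
    convex_univ.norm_image_sub_le_of_norm_fderiv_le (fun y _ => hdiff y) (fun y _ => hb y)
      (mem_univ x) (mem_univ z)
  have h := (convex_closedBall x ‖v‖).norm_image_sub_le_of_norm_fderiv_le' (f := f)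
    (φ := fderiv ℝ f x) (C := M * ‖v‖) (𝕜 := ℝ)
    (fun y _ => (hf.differentiable (by norm_num)) y)
    (fun y hy => (hlip y).trans (mul_le_mul_of_nonneg_left (by
      simpa [dist_eq_norm] using hy) hM))
    (x := x) (y := x + v) (by simp) (by simp)
  simp only [add_sub_cancel_left, Real.norm_eq_abs] at h
  linarith [h, sq ‖v‖, mul_assoc M ‖v‖ ‖v‖]

/-- Difference quotients converge wherever the gradients do, by the uniform Taylor bound. -/
lemma tendsto_abs_sub_div {E : Type*} [NormedAddCommGroup E] [NormedSpace ℝ E] {f : ℕ → E → ℝ}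
    (hf : ∀ n, ContDiff ℝ 2 (f n)) {M : ℝ} (hM : 0 ≤ M)
    (hb : ∀ n x, ‖fderiv ℝ (fderiv ℝ (f n)) x‖ ≤ M) {ε : ℕ → ℝ} (hεpos : ∀ n, 0 < ε n)
    (hεlim : Tendsto ε atTop (𝓝 0)) {x : E} {L : E →L[ℝ] ℝ}
    (hL : Tendsto (fun n => fderiv ℝ (f n) x) atTop (𝓝 L)) (h : E) :
    Tendsto (fun n => |f n (x + ε n • h) - f n x| / ε n) atTop (𝓝 |L h|) := by
  have hLh : Tendsto (fun n => fderiv ℝ (f n) x h) atTop (𝓝 (L h)) :=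
    ((ContinuousLinearMap.apply ℝ ℝ h).continuous.tendsto L).comp hL
  have key : Tendsto (fun n => (f n (x + ε n • h) - f n x) / ε n - fderiv ℝ (f n) x h)
      atTop (𝓝 0) := by
    refine squeeze_zero_norm (a := fun n => M * ε n * ‖h‖ ^ 2) (fun n => ?_) ?_
    · have hn := abs_sub_sub_fderiv_le (hf n) hM (hb n) x (ε n • h)
      have hp := hεpos n
      have : (f n (x + ε n • h) - f n x) / ε n - fderiv ℝ (f n) x h
          = (f n (x + ε n • h) - f n x - fderiv ℝ (f n) x (ε n • h)) / ε n := by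
        rw [map_smul, smul_eq_mul]; field_simp
      rw [this, Real.norm_eq_abs, abs_div, abs_of_pos hp, div_le_iff₀ hp]
      refine hn.trans (le_of_eq ?_)
      rw [norm_smul, Real.norm_of_nonneg hp.le]; ring
    · simpa using (hεlim.const_mul M).mul_const (‖h‖ ^ 2)
  have := (key.add hLh).abs
  simp only [sub_add_cancel, zero_add] at this
  refine this.congr fun n => ?_
  rw [abs_div, abs_of_pos (hεpos n)]

/-! ### Passage to the limit -/

/-- The limit under pointwise a.e. convergence of the gradients, by dominated convergence with
dominating function `c2² M η(h) |h|` on `D × ℝ^d`. -/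
lemma tendsto_lintegral_rescaled {d : ℕ} {D : Set (EuclideanSpace ℝ (Fin d))}
    (hDopen : IsOpen D) (hDbdd : Bornology.IsBounded D)
    {ρ : EuclideanSpace ℝ (Fin d) → ℝ} (hρcont : ContinuousOn ρ D)
    (hρmeas : Measurable (D.indicator ρ))
    {c2 : ℝ} (hρbd : ∀ x ∈ D, 0 ≤ ρ x ∧ ρ x ≤ c2)
    {ηf : ℝ → ℝ} (hη : KernelConditions d ηf) (hd : d ≠ 0)
    {ε : ℕ → ℝ} (hεpos : ∀ n, 0 < ε n) (hεlim : Tendsto ε atTop (𝓝 0))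
    {us : ℕ → EuclideanSpace ℝ (Fin d) → ℝ} (hus : ∀ n, ContDiff ℝ 2 (us n)) {M : ℝ} (hM : 0 ≤ M)
    (hb1 : ∀ n x, ‖fderiv ℝ (us n) x‖ ≤ M)
    (hb2 : ∀ n x, ‖fderiv ℝ (fderiv ℝ (us n)) x‖ ≤ M)
    {G : EuclideanSpace ℝ (Fin d) → (EuclideanSpace ℝ (Fin d) →L[ℝ] ℝ)}
    (hconv : ∀ᵐ x ∂volume.restrict D, Tendsto (fun n => fderiv ℝ (us n) x) atTop (𝓝 (G x))) :
    Tendsto (fun n => ∫⁻ x in D, ∫⁻ h,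
        ENNReal.ofReal (rescaledIntegrand ηf (ε n) (us n) (D.indicator ρ) x h)) atTop
      (𝓝 (∫⁻ x in D, ∫⁻ h, ENNReal.ofReal (ηf ‖h‖ * |G x h| * ρ x * ρ x))) := by
  have hmeas : ∀ n, Measurable fun p : EuclideanSpace ℝ (Fin d) × EuclideanSpace ℝ (Fin d) =>
      ENNReal.ofReal (rescaledIntegrand ηf (ε n) (us n) (D.indicator ρ) p.1 p.2) := fun n =>
    (measurable_rescaledIntegrand hη _ (hus n).continuous.measurable hρmeas).ennreal_ofReal
  have hbound : ∀ n x, x ∈ D → ∀ h,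
      rescaledIntegrand ηf (ε n) (us n) (D.indicator ρ) x h ≤ ηf ‖h‖ * ‖h‖ * (M * c2 ^ 2) := by
    intro n x hx h
    have hq : |us n (x + ε n • h) - us n x| / ε n ≤ M * ‖h‖ := by
      have := convex_univ.norm_image_sub_le_of_norm_fderiv_le (𝕜 := ℝ) (f := us n)
        (fun y _ => ((hus n).differentiable (by norm_num)) y) (fun y _ => hb1 n y)
        (mem_univ x) (mem_univ (x + ε n • h))
      rw [add_sub_cancel_left, norm_smul, Real.norm_of_nonneg (hεpos n).le,
        Real.norm_eq_abs] at this
      rw [div_le_iff₀ (hεpos n)]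
      linarith
    have hc2 : 0 ≤ c2 := (hρbd x hx).1.trans (hρbd x hx).2
    have hρ' : ∀ y, 0 ≤ D.indicator ρ y ∧ D.indicator ρ y ≤ c2 := by
      intro y
      by_cases hy : y ∈ D
      · simpa [hy] using hρbd y hy
      · simpa [hy] using hc2
    have hη0 := hη.nonneg ‖h‖ (norm_nonneg h)
    have hq0 : 0 ≤ |us n (x + ε n • h) - us n x| / ε n := div_nonneg (abs_nonneg _) (hεpos n).le
    calc rescaledIntegrand ηf (ε n) (us n) (D.indicator ρ) x h
        ≤ ηf ‖h‖ * (M * ‖h‖) * c2 * c2 := by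
          unfold rescaledIntegrand
          have := (hρ' x).1
          have := (hρ' (x + ε n • h)).1
          gcongr
          · exact (hρ' x).2
          · exact (hρ' _).2
      _ = _ := by ring
  have hfin : ∫⁻ h : EuclideanSpace ℝ (Fin d),
      ENNReal.ofReal (ηf ‖h‖ * ‖h‖ * (M * c2 ^ 2)) ≠ ∞ :=
    ((hη.integrable_mul_norm hd).mul_const (M * c2 ^ 2)).lintegral_lt_top.ne
  refine tendsto_lintegral_of_dominated_convergence'
    (fun _ => ∫⁻ h : EuclideanSpace ℝ (Fin d), ENNReal.ofReal (ηf ‖h‖ * ‖h‖ * (M * c2 ^ 2)))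
    (fun n => (hmeas n).lintegral_prod_right'.aemeasurable) (fun n => ?_) ?_ ?_
  · filter_upwards [ae_restrict_mem hDopen.measurableSet] with x hx
    exact lintegral_mono fun h => ENNReal.ofReal_le_ofReal (hbound n x hx h)
  · rw [setLIntegral_const]
    exact ENNReal.mul_ne_top hfin hDbdd.measure_lt_top.ne
  · filter_upwards [ae_restrict_mem hDopen.measurableSet, hconv] with x hx hGx
    have hlim : ∀ h, Tendsto
        (fun n => rescaledIntegrand ηf (ε n) (us n) (D.indicator ρ) x h) atTop
        (𝓝 (ηf ‖h‖ * |G x h| * ρ x * ρ x)) := by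
      intro h
      have hpt : Tendsto (fun n => x + ε n • h) atTop (𝓝 x) := by
        simpa using (hεlim.smul_const h).const_add x
      have hρlim : Tendsto (fun n => D.indicator ρ (x + ε n • h)) atTop (𝓝 (ρ x)) := by
        refine Tendsto.congr' ?_ (((hρcont x hx).continuousAt (hDopen.mem_nhds hx)).tendsto.comp hpt)
        filter_upwards [hpt.eventually_mem (hDopen.mem_nhds hx)] with n hn
        simp [hn]
      have hxρ : D.indicator ρ x = ρ x := by simp [hx]
      simp only [rescaledIntegrand, hxρ]
      exact (((tendsto_abs_sub_div hus hM hb2 hεpos hεlim hGx h).const_mul _).mul_const _).mul hρlim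
    have hmeasx : ∀ n, Measurable fun h =>
        ENNReal.ofReal (rescaledIntegrand ηf (ε n) (us n) (D.indicator ρ) x h) := fun n =>
      Measurable.of_uncurry_left (f := fun x h =>
        ENNReal.ofReal (rescaledIntegrand ηf (ε n) (us n) (D.indicator ρ) x h)) (hmeas n)
    exact tendsto_lintegral_of_dominated_convergence
      (fun h => ENNReal.ofReal (ηf ‖h‖ * ‖h‖ * (M * c2 ^ 2)))
      hmeasx
      (fun n => Eventually.of_forall fun h => ENNReal.ofReal_le_ofReal (hbound n x hx h)) hfin
      (Eventually.of_forall fun h => ENNReal.tendsto_ofReal (hlim h))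

/-- The value of the limit: integrate in `h` by rotation invariance, then in `x`. -/
lemma lintegral_limit_eq {d : ℕ} {D : Set (EuclideanSpace ℝ (Fin d))}
    (hDopen : IsOpen D) (hDbdd : Bornology.IsBounded D)
    {ρ : EuclideanSpace ℝ (Fin d) → ℝ} (hρcont : ContinuousOn ρ D)
    {c2 : ℝ} (hρbd : ∀ x ∈ D, 0 ≤ ρ x ∧ ρ x ≤ c2)
    {ηf : ℝ → ℝ} (hη : KernelConditions d ηf) (hd : d ≠ 0)
    {G : EuclideanSpace ℝ (Fin d) → (EuclideanSpace ℝ (Fin d) →L[ℝ] ℝ)} (hG : Continuous G)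
    {e1 : EuclideanSpace ℝ (Fin d)} (he1 : ‖e1‖ = 1) :
    ∫⁻ x in D, ∫⁻ h, ENNReal.ofReal (ηf ‖h‖ * |G x h| * ρ x * ρ x) =
      ENNReal.ofReal (surfaceTension ηf e1 * ∫ x in D, ‖G x‖ * ρ x ^ 2) := by
  have hinner : ∀ x, ∫⁻ h, ENNReal.ofReal (ηf ‖h‖ * |G x h| * ρ x * ρ x) =
      ENNReal.ofReal (surfaceTension ηf e1 * (‖G x‖ * ρ x ^ 2)) := by
    intro x
    have hint : Integrable fun h => ηf ‖h‖ * |G x h| := by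
      refine ((hη.integrable_mul_norm hd).mul_const ‖G x‖).mono'
        (hη.measurable_profile.mul (measurable_norm.comp (G x).measurable)).aestronglyMeasurable
        (Eventually.of_forall fun h => ?_)
      have hη0 := hη.nonneg ‖h‖ (norm_nonneg h)
      rw [Real.norm_of_nonneg (by positivity)]
      calc ηf ‖h‖ * |G x h| ≤ ηf ‖h‖ * (‖G x‖ * ‖h‖) :=
            mul_le_mul_of_nonneg_left ((G x).le_opNorm h) hη0
        _ = _ := by ring
    rw [← ofReal_integral_eq_lintegral_ofReal ((hint.mul_const (ρ x)).mul_const (ρ x))]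
    · rw [integral_mul_const, integral_mul_const, integral_profile_mul_abs_apply ηf he1]
      congr 1
      ring
    · refine Eventually.of_forall fun h => ?_
      have hη0 := hη.nonneg ‖h‖ (norm_nonneg h)
      have h2 : 0 ≤ ηf ‖h‖ * |G x h| * (ρ x * ρ x) :=
        mul_nonneg (by positivity) (mul_self_nonneg _)
      simpa [mul_assoc] using h2
  have hσ : 0 ≤ surfaceTension ηf e1 :=
    integral_nonneg fun h => mul_nonneg (hη.nonneg _ (norm_nonneg _)) (abs_nonneg _)
  simp only [hinner]
  rw [← integral_const_mul, ofReal_integral_eq_lintegral_ofReal]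
  · obtain ⟨C, hC⟩ := hDbdd.isCompact_closure.exists_bound_of_continuousOn hG.continuousOn
    have : IsFiniteMeasure (volume.restrict D) := ⟨by simpa using hDbdd.measure_lt_top⟩
    refine Integrable.const_mul (Integrable.of_bound
      ((hG.norm.continuousOn.mul (hρcont.pow 2)).aestronglyMeasurable hDopen.measurableSet)
      (C * c2 ^ 2) ?_) _
    filter_upwards [ae_restrict_mem hDopen.measurableSet] with x hx
    have h1 := hC x (subset_closure hx)
    have h2 := hρbd x hx
    change ‖‖G x‖ * ρ x ^ 2‖ ≤ _
    rw [Real.norm_of_nonneg (by positivity)]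
    have := (norm_nonneg _).trans h1
    gcongr
    · exact h2.1
    · exact h2.2
  · exact Eventually.of_forall fun x => by positivity

/-- Convergence in `L¹(D)` gives a.e. convergence along a subsequence. -/
lemma exists_subseq_ae_tendsto {E F : Type*} [NormedAddCommGroup E] [MeasurableSpace E]
    [BorelSpace E] [ProperSpace E] [NormedAddCommGroup F] [SecondCountableTopology E]
    {μ : Measure E} [IsFiniteMeasureOnCompacts μ] {D : Set E}
    (hDbdd : Bornology.IsBounded D) {g : ℕ → E → F} {G : E → F} (hg : ∀ n, Continuous (g n))
    (hG : Continuous G)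
    (hconv : Tendsto (fun n => ∫ x in D, ‖g n x - G x‖ ∂μ) atTop (𝓝 0)) :
    ∃ ms : ℕ → ℕ, StrictMono ms ∧
      ∀ᵐ x ∂μ.restrict D, Tendsto (fun n => g (ms n) x) atTop (𝓝 (G x)) := by
  refine TendstoInMeasure.exists_seq_tendsto_ae (tendstoInMeasure_of_tendsto_eLpNorm one_ne_zero
    (fun n => (hg n).aestronglyMeasurable) hG.aestronglyMeasurable ?_)
  have h0 := (ENNReal.continuous_ofReal.tendsto 0).comp hconv
  rw [ENNReal.ofReal_zero] at h0
  refine h0.congr fun n => ?_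
  have hint : Integrable (fun x => g n x - G x) (μ.restrict D) :=
    (((hg n).sub hG).continuousOn.integrableOn_compact hDbdd.isCompact_closure).mono_set
      subset_closure
  rw [Function.comp_apply, ofReal_integral_norm_eq_lintegral_enorm hint,
    eLpNorm_one_eq_lintegral_enorm]
  rfl

/-- Lemma 4.2: limit of the nonlocal total variations along uniformly `C²` functions whose
gradients converge in `L¹(D)`. -/
theorem nonlocalTV_limit_of_smooth
    {d : ℕ} (D : Set (EuclideanSpace ℝ (Fin d)))
    (hDopen : IsOpen D) (hDbdd : Bornology.IsBounded D)
    (ρ : EuclideanSpace ℝ (Fin d) → ℝ)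
    (K : ℝ≥0) (hρlip : LipschitzOnWith K ρ D)
    (c1 c2 : ℝ) (hc1 : 0 < c1) (hρbd : ∀ x ∈ D, c1 ≤ ρ x ∧ ρ x ≤ c2)
    (ηf : ℝ → ℝ) (hη : KernelConditions d ηf)
    (ε : ℕ → ℝ) (hεpos : ∀ n, 0 < ε n) (hεlim : Tendsto ε atTop (𝓝 0))
    (us : ℕ → EuclideanSpace ℝ (Fin d) → ℝ)
    (hus : ∀ n, ContDiff ℝ 2 (us n))
    (M : ℝ)
    (hbound : ∀ n x, ‖fderiv ℝ (us n) x‖ + ‖fderiv ℝ (fderiv ℝ (us n)) x‖ ≤ M)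
    (u : EuclideanSpace ℝ (Fin d) → ℝ) (hu : ContDiff ℝ 2 u)
    (hgradconv :
      Tendsto (fun n => ∫ x in D, ‖fderiv ℝ (us n) x - fderiv ℝ u x‖) atTop (𝓝 0))
    (e1 : EuclideanSpace ℝ (Fin d)) (he1 : ‖e1‖ = 1) :
    Tendsto (fun n => nonlocalTV D ηf (ε n) (us n) ρ) atTop
      (𝓝 (ENNReal.ofReal (surfaceTension ηf e1 * ∫ x in D, ‖fderiv ℝ u x‖ * ρ x ^ 2))) := by
  have hd : d ≠ 0 := by
    rintro rfl
    simp [Subsingleton.elim e1 0] at he1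
  have hM : 0 ≤ M :=
    le_trans (by positivity) (hbound 0 0)
  have hρ0 : ∀ x ∈ D, 0 ≤ ρ x ∧ ρ x ≤ c2 := fun x hx =>
    ⟨hc1.le.trans (hρbd x hx).1, (hρbd x hx).2⟩
  have hρmeas : Measurable (D.indicator ρ) := by
    classical
    rw [← Set.piecewise_eq_indicator]
    exact hρlip.continuousOn.measurable_piecewise continuous_zero.continuousOn
      hDopen.measurableSet
  have hcont : ∀ n, Continuous (fderiv ℝ (us n)) := fun n =>
    (hus n).continuous_fderiv (by norm_num)
  have hGcont : Continuous (fderiv ℝ u) := hu.continuous_fderiv (by norm_num)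
  rw [← lintegral_limit_eq hDopen hDbdd hρlip.continuousOn hρ0 hη hd hGcont he1]
  simp only [fun n => nonlocalTV_eq_lintegral_rescaled hDopen.measurableSet hη (hεpos n)
    (hus n).continuous.measurable hρmeas]
  -- Dominated convergence needs a.e. convergent gradients, available only along subsequences.
  refine tendsto_of_subseq_tendsto fun ns hns => ?_
  obtain ⟨ms, hms, hae⟩ := exists_subseq_ae_tendsto hDbdd (fun n => hcont (ns n)) hGcont
    (hgradconv.comp hns)
  exact ⟨ms, tendsto_lintegral_rescaled hDopen hDbdd hρlip.continuousOn hρmeas hρ0 hη hd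
    (fun n => hεpos (ns (ms n))) (hεlim.comp (hns.comp hms.tendsto_atTop))
    (fun n => hus (ns (ms n))) hM
    (fun n x => le_trans (le_add_of_nonneg_right (by positivity)) (hbound _ x))
    (fun n x => le_trans (le_add_of_nonneg_left (by positivity)) (hbound _ x)) hae⟩

end
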